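/- Let κ, m ∈ ℝ and η̄ > 0. Let A, B : ℝ → ℂ be differentiable with A'(τ) = κ m B(τ) and B'(τ) = −κ B(τ) + ½ η̄² B(τ)² for all τ, and set G(τ, v) := exp(A(τ) + v B(τ)). Let T₁, T₂ : ℝ → ℂ be arbitrary functions, and let h₀, h₁, h₂ : ℝ → ℂ be differentiable with h₂'(τ) = 2(−κ + η̄² B(τ)) h₂(τ) + T₂(τ), h₁'(τ) = (−κ + η̄² B(τ)) h₁(τ) + (2κm + η̄²) h₂(τ) + T₁(τ), h₀'(τ) = κ m h₁(τ), and h₀(0) = h₁(0) = h₂(0) = 0. Define P(τ, v) := (h₀(τ) + v h₁(τ) + v² h₂(τ)) G(τ, v). Then P(0, v) = 0 for all v, and for every (τ, v) ∈ ℝ × ℝ, −∂P/∂τ + κ(m − v) ∂P/∂v + ½ η̄² v ∂²P/∂v² = −v (T₁(τ) + v T₂(τ)) G(τ, v). -/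

import Mathlib

/-!
The proof is a Doob transform by the affine kernel `G`. The second-order term of the CIR operator
`L` adds a cross term to the Leibniz rule, `L (Q G) = (L Q) G + Q (L G) + η² v ∂_v Q ∂_v G`. The
Riccati equations say exactly that `L G = 0`, and `∂_v G = B G`, so conjugating by `G` only adds the
drift `η² v B ∂_v` to `L`. The new operator sends quadratics in `v` with coefficients depending on
`τ` to quadratics, and the linear system for `h₀, h₁, h₂` matches coefficients of `1, v, v²`.
-/

open Complex

theorem deriv_deriv_fun_mul {𝕜 𝔸 : Type*} [NontriviallyNormedField 𝕜] [NormedRing 𝔸]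
    [NormedAlgebra 𝕜 𝔸] {f g : 𝕜 → 𝔸} {x : 𝕜} (hf : ContDiffAt 𝕜 2 f x)
    (hg : ContDiffAt 𝕜 2 g x) :
    deriv (deriv fun y => f y * g y) x =
      deriv (deriv f) x * g x + 2 * (deriv f x * deriv g x) + f x * deriv (deriv g) x := by
  simpa [iteratedDeriv_succ, Finset.sum_range_succ, mul_assoc, add_comm, add_left_comm]
    using iteratedDeriv_fun_mul (n := 2) hf hg

/-- The backward Cox–Ingersoll–Ross operator `-∂_τ + κ (m - v) ∂_v + ½ η² v ∂²_v` in the time to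
maturity `τ`, acting on functions of `(τ, v)`. The parameters may be complex; derivatives are
Mathlib's total `deriv`, so values are meaningful only for functions with these derivatives. -/
noncomputable def cirOperator (κ m η : ℂ) (F : ℝ → ℝ → ℂ) (τ v : ℝ) : ℂ :=
  -deriv (fun s => F s v) τ + κ * (m - v) * deriv (F τ) v
    + (1 / 2) * η ^ 2 * v * deriv (deriv (F τ)) v

/-- The exponential-affine kernel `exp (A(τ) + v B(τ))`, through which the transforms of CIR option
prices are expressed. -/
noncomputable def affineKernel (A B : ℝ → ℂ) (τ v : ℝ) : ℂ :=
  exp (A τ + v * B τ)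

/-- The polynomial prefactor `h₀(τ) + v h₁(τ) + v² h₂(τ)` of the correction ansatz. -/
def quadraticPrefactor (h₀ h₁ h₂ : ℝ → ℂ) (τ v : ℝ) : ℂ :=
  h₀ τ + v * h₁ τ + (v : ℂ) ^ 2 * h₂ τ

section CIR

variable {κ m η : ℂ} {τ v : ℝ}

theorem cirOperator_mul {Q G : ℝ → ℝ → ℂ} (hQτ : DifferentiableAt ℝ (fun s => Q s v) τ)
    (hGτ : DifferentiableAt ℝ (fun s => G s v) τ) (hQv : ContDiffAt ℝ 2 (Q τ) v)
    (hGv : ContDiffAt ℝ 2 (G τ) v) :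
    cirOperator κ m η (fun s w => Q s w * G s w) τ v =
      cirOperator κ m η Q τ v * G τ v + Q τ v * cirOperator κ m η G τ v
        + η ^ 2 * v * (deriv (Q τ) v * deriv (G τ) v) := by
  have hQ : DifferentiableAt ℝ (Q τ) v := hQv.differentiableAt two_ne_zero
  have hG : DifferentiableAt ℝ (G τ) v := hGv.differentiableAt two_ne_zero
  simp only [cirOperator, deriv_fun_mul hQτ hGτ, deriv_fun_mul hQ hG, deriv_deriv_fun_mul hQv hGv]
  ring

section AffineKernel

variable {A B : ℝ → ℂ}

theorem contDiff_affineKernel {n : WithTop ℕ∞} : ContDiff ℝ n (affineKernel A B τ) :=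
  (contDiff_const.add (ofRealCLM.contDiff.mul contDiff_const)).cexp

theorem hasDerivAt_affineKernel_time {A' B' : ℂ} (hA : HasDerivAt A A' τ)
    (hB : HasDerivAt B B' τ) :
    HasDerivAt (fun s => affineKernel A B s v) ((A' + v * B') * affineKernel A B τ v) τ :=
  (hA.fun_add (hB.const_mul (v : ℂ))).cexp.congr_deriv (mul_comm _ _)

theorem deriv_affineKernel : deriv (affineKernel A B τ) = fun w => B τ * affineKernel A B τ w := by
  funext w
  have hw : HasDerivAt (fun w : ℝ => (w : ℂ)) 1 w := ofRealCLM.hasDerivAt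
  have hkernel := ((hw.mul_const (B τ)).const_add (A τ)).cexp
  exact (hkernel.congr_deriv (by rw [one_mul, mul_comm, affineKernel])).deriv

theorem deriv_deriv_affineKernel :
    deriv (deriv (affineKernel A B τ)) v = B τ ^ 2 * affineKernel A B τ v := by
  rw [deriv_affineKernel, deriv_const_mul_field, deriv_affineKernel]
  ring

theorem cirOperator_affineKernel_eq_zero (hA : HasDerivAt A (κ * m * B τ) τ)
    (hB : HasDerivAt B (-κ * B τ + (1 / 2) * η ^ 2 * B τ ^ 2) τ) :
    cirOperator κ m η (affineKernel A B) τ v = 0 := by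
  rw [cirOperator, (hasDerivAt_affineKernel_time hA hB).deriv, deriv_deriv_affineKernel,
    deriv_affineKernel]
  ring

theorem cirOperator_mul_affineKernel {Q : ℝ → ℝ → ℂ}
    (hA : HasDerivAt A (κ * m * B τ) τ)
    (hB : HasDerivAt B (-κ * B τ + (1 / 2) * η ^ 2 * B τ ^ 2) τ)
    (hQτ : DifferentiableAt ℝ (fun s => Q s v) τ) (hQv : ContDiffAt ℝ 2 (Q τ) v) :
    cirOperator κ m η (fun s w => Q s w * affineKernel A B s w) τ v =
      (cirOperator κ m η Q τ v + η ^ 2 * v * B τ * deriv (Q τ) v) * affineKernel A B τ v := by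
  rw [cirOperator_mul hQτ (hasDerivAt_affineKernel_time hA hB).differentiableAt hQv
    contDiff_affineKernel.contDiffAt, cirOperator_affineKernel_eq_zero hA hB, deriv_affineKernel]
  ring

end AffineKernel

section QuadraticPrefactor

variable {h₀ h₁ h₂ : ℝ → ℂ}

theorem contDiff_quadraticPrefactor {n : WithTop ℕ∞} :
    ContDiff ℝ n (quadraticPrefactor h₀ h₁ h₂ τ) :=
  (contDiff_const.add (ofRealCLM.contDiff.mul contDiff_const)).add
    ((ofRealCLM.contDiff.pow 2).mul contDiff_const)

theorem hasDerivAt_quadraticPrefactor_time {h₀' h₁' h₂' : ℂ} (hh₀ : HasDerivAt h₀ h₀' τ)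
    (hh₁ : HasDerivAt h₁ h₁' τ) (hh₂ : HasDerivAt h₂ h₂' τ) :
    HasDerivAt (fun s => quadraticPrefactor h₀ h₁ h₂ s v)
      (h₀' + v * h₁' + (v : ℂ) ^ 2 * h₂') τ :=
  (hh₀.fun_add (hh₁.const_mul (v : ℂ))).fun_add (hh₂.const_mul ((v : ℂ) ^ 2))

theorem deriv_quadraticPrefactor :
    deriv (quadraticPrefactor h₀ h₁ h₂ τ) = fun w : ℝ => h₁ τ + w * (2 * h₂ τ) := by
  funext w
  have hw : HasDerivAt (fun w : ℝ => (w : ℂ)) 1 w := ofRealCLM.hasDerivAt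
  have hQ := ((hw.mul_const (h₁ τ)).const_add (h₀ τ)).fun_add ((hw.fun_pow 2).mul_const (h₂ τ))
  refine (hQ.congr_deriv ?_).deriv
  push_cast
  ring

theorem deriv_deriv_quadraticPrefactor :
    deriv (deriv (quadraticPrefactor h₀ h₁ h₂ τ)) v = 2 * h₂ τ := by
  have hv : HasDerivAt (fun w : ℝ => (w : ℂ)) 1 v := ofRealCLM.hasDerivAt
  rw [deriv_quadraticPrefactor, ((hv.mul_const (2 * h₂ τ)).const_add (h₁ τ)).deriv, one_mul]

theorem cirOperator_quadraticPrefactor {h₀' h₁' h₂' : ℂ} (hh₀ : HasDerivAt h₀ h₀' τ)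
    (hh₁ : HasDerivAt h₁ h₁' τ) (hh₂ : HasDerivAt h₂ h₂' τ) :
    cirOperator κ m η (quadraticPrefactor h₀ h₁ h₂) τ v =
      (κ * m * h₁ τ - h₀') + v * (2 * κ * m * h₂ τ - κ * h₁ τ + η ^ 2 * h₂ τ - h₁')
        + (v : ℂ) ^ 2 * (-2 * κ * h₂ τ - h₂') := by
  rw [cirOperator, (hasDerivAt_quadraticPrefactor_time hh₀ hh₁ hh₂).deriv,
    deriv_deriv_quadraticPrefactor, deriv_quadraticPrefactor]
  ring

end QuadraticPrefactor

end CIR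

theorem vix_correction_ansatz_general {κ m η : ℂ} {A B T₁ T₂ h₀ h₁ h₂ : ℝ → ℂ}
    (hA : ∀ τ, HasDerivAt A (κ * m * B τ) τ)
    (hB : ∀ τ, HasDerivAt B (-κ * B τ + (1 / 2) * η ^ 2 * B τ ^ 2) τ)
    (hh₂ : ∀ τ, HasDerivAt h₂ (2 * (-κ + η ^ 2 * B τ) * h₂ τ + T₂ τ) τ)
    (hh₁ : ∀ τ, HasDerivAt h₁
      ((-κ + η ^ 2 * B τ) * h₁ τ + (2 * κ * m + η ^ 2) * h₂ τ + T₁ τ) τ)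
    (hh₀ : ∀ τ, HasDerivAt h₀ (κ * m * h₁ τ) τ)
    (hh₀0 : h₀ 0 = 0) (hh₁0 : h₁ 0 = 0) (hh₂0 : h₂ 0 = 0) :
    (∀ v, quadraticPrefactor h₀ h₁ h₂ 0 v * affineKernel A B 0 v = 0) ∧
      ∀ τ v : ℝ,
        cirOperator κ m η (fun s w => quadraticPrefactor h₀ h₁ h₂ s w * affineKernel A B s w) τ v =
          -v * (T₁ τ + v * T₂ τ) * affineKernel A B τ v := by
  refine ⟨fun v => by simp [quadraticPrefactor, hh₀0, hh₁0, hh₂0], fun τ v => ?_⟩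
  have hQτ := hasDerivAt_quadraticPrefactor_time (v := v) (hh₀ τ) (hh₁ τ) (hh₂ τ)
  have coefficient_matching :
      cirOperator κ m η (quadraticPrefactor h₀ h₁ h₂) τ v
          + η ^ 2 * v * B τ * deriv (quadraticPrefactor h₀ h₁ h₂ τ) v =
        -v * (T₁ τ + v * T₂ τ) := by
    rw [cirOperator_quadraticPrefactor (hh₀ τ) (hh₁ τ) (hh₂ τ), deriv_quadraticPrefactor]
    ring
  rw [cirOperator_mul_affineKernel (hA τ) (hB τ) hQτ.differentiableAt
    contDiff_quadraticPrefactor.contDiffAt, coefficient_matching]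

/-- The VIX first-order correction ansatz `P(τ,v) = (h₀ + v h₁ + v² h₂) G` solves the
sourced backward CIR PDE `-∂_τ P + κ(m-v)∂_v P + ½η̄²v ∂²_v P = -v(T₁ + vT₂)G`
with zero initial condition, when `h₀, h₁, h₂` solve the stated triangular linear
ODE system and `G(τ,v) = exp(A(τ) + vB(τ))` with `A' = κmB`, `B' = -κB + ½η̄²B²`. -/
theorem vix_correction_ansatz (κ m ηb : ℝ) (hηb : 0 < ηb) (A B : ℝ → ℂ)
    (hA : ∀ τ : ℝ, HasDerivAt A ((κ : ℂ) * (m : ℂ) * B τ) τ)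
    (hB : ∀ τ : ℝ, HasDerivAt B
      (-(κ : ℂ) * B τ + (1 / 2) * (ηb : ℂ) ^ 2 * (B τ) ^ 2) τ)
    (G : ℝ → ℝ → ℂ)
    (hG : G = fun (τ v : ℝ) => Complex.exp (A τ + (v : ℂ) * B τ))
    (T₁ T₂ : ℝ → ℂ) (h₀ h₁ h₂ : ℝ → ℂ)
    (hh₂ : ∀ τ : ℝ, HasDerivAt h₂
      (2 * (-(κ : ℂ) + (ηb : ℂ) ^ 2 * B τ) * h₂ τ + T₂ τ) τ)
    (hh₁ : ∀ τ : ℝ, HasDerivAt h₁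
      ((-(κ : ℂ) + (ηb : ℂ) ^ 2 * B τ) * h₁ τ
        + (2 * (κ : ℂ) * (m : ℂ) + (ηb : ℂ) ^ 2) * h₂ τ + T₁ τ) τ)
    (hh₀ : ∀ τ : ℝ, HasDerivAt h₀ ((κ : ℂ) * (m : ℂ) * h₁ τ) τ)
    (hh₀0 : h₀ 0 = 0) (hh₁0 : h₁ 0 = 0) (hh₂0 : h₂ 0 = 0)
    (P : ℝ → ℝ → ℂ)
    (hP : P = fun (τ v : ℝ) => (h₀ τ + (v : ℂ) * h₁ τ + (v : ℂ) ^ 2 * h₂ τ) * G τ v) :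
    (∀ v : ℝ, P 0 v = 0) ∧
      ∀ τ v : ℝ,
        -deriv (fun τ' : ℝ => P τ' v) τ
        + (κ : ℂ) * ((m : ℂ) - (v : ℂ)) * deriv (fun v' : ℝ => P τ v') v
        + (1 / 2) * (ηb : ℂ) ^ 2 * (v : ℂ) *
            deriv (fun v' : ℝ => deriv (fun v'' : ℝ => P τ v'') v') v
        = -(v : ℂ) * (T₁ τ + (v : ℂ) * T₂ τ) * G τ v := by
  subst hG hP
  exact vix_correction_ansatz_general hA hB hh₂ hh₁ hh₀ hh₀0 hh₁0 hh₂0
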